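/- Multiplicity equals degree a.e.: under the hypotheses of the degree identity (F continuous on Ω̄, F ∈ W^{1,n}_loc satisfying condition (N), J_F ≥ 0 a.e.), for every connected component V of ℝⁿ \ F(∂Ω) contained in F(Ω), the multiplicity function satisfies N(F,Ω,y) = deg(F,Ω,V) for almost every y ∈ V. -/

import Mathlib

/-!
Call `x ∈ Ω` good if `F` is differentiable at `x` with positive Jacobian. The points of `Ω` that are
not good have a negligible image, by condition (N) where differentiability or `0 ≤ J_F` fails, and
by Sard's lemma where `J_F = 0`. So almost every `y ∈ V` has only good preimages, and each of these
should contribute `+1` to the degree; the formal content is that the number of such preimages is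
locally constant on `V` (`exists_multiplicity_on_ball`). No local integrability of `J_F` is
assumed, so this cannot be extracted from the degree integrals alone, which may a priori diverge;
a small degree theory is used instead.

The degree of a `C¹` map `G` is measured by `∫_U ρ(G) det DG`, where `ρ = det DP` is a bump
(`exists_profile`), so that the integrand is `det D(P ∘ G)`. The key fact is that `∫_U det Df` only
depends on `f` off `U` (`integral_det_fderiv_congr`): for large `L` the maps `L • id + f` are
bijections, the integral of their Jacobian is the volume of the image of `U`, which is the
complement of the image of `Uᶜ`, and `L ↦ det (L • id + Df)` is a polynomial, hence is recovered at
`L = 0` from large `L`. Homotopy invariance (`degree_homotopy`) follows by a cutoff. For `y` with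
good preimages only, a homotopy to the linearizations of `F` shows that the degree at `y` of a close
`C¹` approximation of `F` is the number of preimages (`degree_eq_ncard_fiber`); a homotopy between
different approximations, scales and targets shows that it does not depend on `y` near a given
point.

Once the multiplicity is a constant `k` almost everywhere on a ball of `V`, the area formula
(`lintegral_det_mul_comp_of_encard_fiber`) with a normalized bump `ρ` supported in that ball turns
the hypothesis on `d` into `d = k`.
-/

open MeasureTheory Real Set ENNReal

/-! ### The Jacobian as a null Lagrangian -/

open Filter Topology in
/-- For `L` large, `L • id + f` is a bijection with everywhere positive Jacobian: it is a small
Lipschitz perturbation of a homothety. -/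
theorem large_scale_perturbation {E : Type*} [NormedAddCommGroup E] [NormedSpace ℝ E]
    [FiniteDimensional ℝ E] {f : E → E} (hf : ContDiff ℝ 1 f) (hc : HasCompactSupport f) :
    ∃ L₀ : ℝ, ∀ L ≥ L₀, Function.Bijective (fun x => L • x + f x) ∧
      ∀ x, 0 < (L • ContinuousLinearMap.id ℝ E + fderiv ℝ f x).det := by
  obtain ⟨C, hC⟩ := hf.lipschitzWith_of_hasCompactSupport hc one_ne_zero
  have hdet : ∀ᶠ B : E →L[ℝ] E in 𝓝 0, 0 < (ContinuousLinearMap.id ℝ E + B).det := by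
    have hcont : Continuous fun B : E →L[ℝ] E => (ContinuousLinearMap.id ℝ E + B).det :=
      ContinuousLinearMap.continuous_det.comp (by fun_prop)
    refine hcont.continuousAt.eventually (lt_mem_nhds ?_)
    simp [ContinuousLinearMap.det]
  obtain ⟨δ, hδ, hδ'⟩ := Metric.eventually_nhds_iff.1 hdet
  refine ⟨C + C / δ + 1, fun L hL => ?_⟩
  have hCδ : (0 : ℝ) ≤ C / δ := by positivity
  have hLC : (C : ℝ) < L := by linarith
  have hLpos : 0 < L := lt_of_le_of_lt C.2 hLC
  constructor
  · rcases subsingleton_or_nontrivial E with hE | hE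
    · exact ⟨Function.injective_of_subsingleton _, fun y => ⟨y, Subsingleton.elim _ _⟩⟩
    let e : E ≃L[ℝ] E := ContinuousLinearEquiv.smulLeft (Units.mk0 L hLpos.ne')
    have happ : ApproximatesLinearOn (fun x => L • x + f x) (e : E →L[ℝ] E) univ C := by
      intro x _ y _
      have : L • x + f x - (L • y + f y) - (e : E →L[ℝ] E) (x - y) = f x - f y := by
        have : (e : E →L[ℝ] E) (x - y) = L • (x - y) := rfl
        rw [this, smul_sub]; abel
      rw [this]
      exact hC.norm_sub_le x y
    have hsymm : ‖(e.symm : E →L[ℝ] E)‖ = L⁻¹ := by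
      have : (e.symm : E →L[ℝ] E) = L⁻¹ • ContinuousLinearMap.id ℝ E := by
        ext x; rfl
      rw [this, norm_smul, ContinuousLinearMap.norm_id, mul_one, Real.norm_of_nonneg]
      positivity
    have hlt : C < ‖(e.symm : E →L[ℝ] E)‖₊⁻¹ := by
      rw [← NNReal.coe_lt_coe]
      simpa [hsymm] using hLC
    exact (happ.toHomeomorph _ (Or.inr hlt)).bijective
  · intro x
    have hB : ‖L⁻¹ • fderiv ℝ f x‖ < δ := by
      rw [norm_smul, norm_inv, Real.norm_of_nonneg hLpos.le]
      have h1 := norm_fderiv_le_of_lipschitz ℝ hC (x₀ := x)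
      rw [inv_mul_lt_iff₀ hLpos]
      have : (C : ℝ) / δ < L := by linarith [C.2]
      rw [div_lt_iff₀ hδ] at this
      linarith
    have h2 := hδ' (y := L⁻¹ • fderiv ℝ f x) (by simpa using hB)
    have h3 : L • ContinuousLinearMap.id ℝ E + fderiv ℝ f x
        = L • (ContinuousLinearMap.id ℝ E + L⁻¹ • fderiv ℝ f x) := by
      rw [smul_add, smul_smul, mul_inv_cancel₀ hLpos.ne', one_smul]
    rw [h3, ContinuousLinearMap.det, ContinuousLinearMap.toLinearMap_smul, LinearMap.det_smul]
    exact mul_pos (pow_pos hLpos _) h2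

/-- Both integrals are the volume of the image of `U` under a bijection, and the two bijections
agree off `U`. -/
theorem integral_det_large_scale {E : Type*} [NormedAddCommGroup E] [NormedSpace ℝ E]
    [FiniteDimensional ℝ E] [MeasurableSpace E] [BorelSpace E] (μ : Measure E)
    [μ.IsAddHaarMeasure] {f g : E → E} (hf : ContDiff ℝ 1 f)
    (hfc : HasCompactSupport f) (hg : ContDiff ℝ 1 g) (hgc : HasCompactSupport g)
    {U : Set E} (hU : MeasurableSet U) (hfg : ∀ x ∉ U, f x = g x) :
    ∃ L₀ : ℝ, ∀ L ≥ L₀, ∫ x in U, (L • ContinuousLinearMap.id ℝ E + fderiv ℝ f x).det ∂μ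
      = ∫ x in U, (L • ContinuousLinearMap.id ℝ E + fderiv ℝ g x).det ∂μ := by
  have key : ∀ {h : E → E}, ContDiff ℝ 1 h → ∀ L : ℝ, Function.Bijective (fun x => L • x + h x) →
      (∀ x, 0 < (L • ContinuousLinearMap.id ℝ E + fderiv ℝ h x).det) →
      ∫ x in U, (L • ContinuousLinearMap.id ℝ E + fderiv ℝ h x).det ∂μ
        = ∫ x in (fun x => L • x + h x) '' U, (1 : ℝ) ∂μ := by
    intro h hh L hb hpos
    rw [integral_image_eq_integral_abs_det_fderiv_smul μ hU (f' := fun x =>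
      L • ContinuousLinearMap.id ℝ E + fderiv ℝ h x) ?_ hb.1.injOn]
    · simp [abs_of_pos (hpos _)]
    · intro x _
      exact (((hasFDerivAt_id x).const_smul L).add
        (hh.differentiable one_ne_zero x).hasFDerivAt).hasFDerivWithinAt
  obtain ⟨L₁, h₁⟩ := large_scale_perturbation hf hfc
  obtain ⟨L₂, h₂⟩ := large_scale_perturbation hg hgc
  refine ⟨max L₁ L₂, fun L hL => ?_⟩
  obtain ⟨b₁, p₁⟩ := h₁ L (le_trans (le_max_left _ _) hL)
  obtain ⟨b₂, p₂⟩ := h₂ L (le_trans (le_max_right _ _) hL)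
  rw [key hf L b₁ p₁, key hg L b₂ p₂]
  -- bijections agreeing off `U` have the same image of `Uᶜ`, hence of `U`
  congr 2
  have : (fun x => L • x + f x) '' Uᶜ = (fun x => L • x + g x) '' Uᶜ :=
    image_congr fun x hx => by simp [hfg x hx]
  rw [image_compl_eq b₁, image_compl_eq b₂] at this
  exact compl_injective this

/-- Lagrange interpolation of the polynomial `L ↦ det (L • id + B)`, of degree `dim E`, evaluated
at `L = 0`: the nodes can be taken beyond any given bound and, like the weights, do not depend on
`B`. -/
theorem exists_det_eq_sum (E : Type*) [NormedAddCommGroup E] [NormedSpace ℝ E]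
    [FiniteDimensional ℝ E] (L₀ : ℝ) :
    ∃ (s : Finset ℕ) (w v : ℕ → ℝ), (∀ i, L₀ ≤ v i) ∧ ∀ B : E →L[ℝ] E,
      B.det = ∑ i ∈ s, w i * (v i • ContinuousLinearMap.id ℝ E + B).det := by
  classical
  set s := Finset.range (Module.finrank ℝ E + 1) with hs
  set v : ℕ → ℝ := fun i => L₀ + i with hv
  refine ⟨s, fun i => (Lagrange.basis s v i).eval 0, v, fun i => by simp [hv], fun B => ?_⟩
  set p := (-(B : E →ₗ[ℝ] E)).charpoly with hp
  have hev : ∀ t : ℝ, p.eval t = (t • ContinuousLinearMap.id ℝ E + B).det := by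
    intro t
    rw [hp, LinearMap.eval_charpoly, ContinuousLinearMap.det]
    congr 1
    ext x
    simp [Algebra.algebraMap_eq_smul_one]
  have hdeg : p.degree < s.card := by
    rw [hs, Finset.card_range]
    refine lt_of_le_of_lt Polynomial.degree_le_natDegree ?_
    rw [hp, LinearMap.charpoly_natDegree]
    exact_mod_cast Nat.lt_succ_self _
  have hinj : Set.InjOn v s := fun i _ j _ h => by simpa [hv] using h
  have h := congrArg (Polynomial.eval 0) (Lagrange.eq_interpolate hinj hdeg)
  rw [Lagrange.interpolate_apply, Polynomial.eval_finsetSum, hev] at h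
  simpa [hev, mul_comm] using h

theorem exists_cutoff {E : Type*} [NormedAddCommGroup E] [NormedSpace ℝ E]
    [FiniteDimensional ℝ E] {s t : Set E} (hs : IsClosed s) (ht : IsOpen t) (hst : s ⊆ t) :
    ∃ χ : E → ℝ, ContDiff ℝ 1 χ ∧ (∀ x ∈ s, ∀ᶠ y in nhds x, χ y = 1) ∧ (∀ x ∉ t, χ x = 0) ∧
      ∀ x, χ x ∈ Icc (0 : ℝ) 1 := by
  obtain ⟨χ, h1, h0, h⟩ := exists_contMDiffMap_one_nhds_of_subset_interior (n := 1)
    (modelWithCornersSelf ℝ E) hs (ht.interior_eq.symm ▸ hst)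
  exact ⟨χ, χ.contMDiff.contDiff, fun x hx => Filter.Eventually.filter_mono (nhds_le_nhdsSet hx) h1, h0, h⟩

/-- The Jacobian determinant is a null Lagrangian: its integral over `U` depends only on the
values of the map off `U`. Interpolation in `L` reduces `det (Df)` to `det (L • id + Df)` for
large `L`. -/
theorem integral_det_fderiv_congr {E : Type*} [NormedAddCommGroup E] [NormedSpace ℝ E]
    [FiniteDimensional ℝ E] [MeasurableSpace E] [BorelSpace E] (μ : Measure E)
    [μ.IsAddHaarMeasure] {f g : E → E} (hf : ContDiff ℝ 1 f)
    (hg : ContDiff ℝ 1 g) {U : Set E} (hU : IsOpen U) (hb : Bornology.IsBounded U)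
    (hfg : ∀ x ∉ U, f x = g x) :
    ∫ x in U, (fderiv ℝ f x).det ∂μ = ∫ x in U, (fderiv ℝ g x).det ∂μ := by
  obtain ⟨R, hR⟩ := hb.subset_closedBall 0
  obtain ⟨χ, hχ, h1, h0, -⟩ := exists_cutoff (E := E) (s := Metric.closedBall 0 R)
    (t := Metric.ball 0 (R + 1)) Metric.isClosed_closedBall Metric.isOpen_ball
    (Metric.closedBall_subset_ball (by linarith))
  have hder : ∀ (h : E → E), ∀ x ∈ U, fderiv ℝ (fun x => χ x • h x) x = fderiv ℝ h x := by
    intro h x hx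
    apply Filter.EventuallyEq.fderiv_eq
    filter_upwards [h1 x (hR hx)] with y hy
    simp [hy]
  have hcs : ∀ h : E → E, HasCompactSupport (fun x => χ x • h x) := by
    intro h
    refine HasCompactSupport.of_support_subset_isCompact (isCompact_closedBall (0 : E) (R + 1)) ?_
    intro x hx
    by_contra hx'
    exact hx (by simp [h0 x fun h => hx' (Metric.ball_subset_closedBall h)])
  have hcd : ∀ h : E → E, ContDiff ℝ 1 h → ContDiff ℝ 1 (fun x => χ x • h x) :=
    fun h hh => hχ.smul hh
  obtain ⟨L₀, hL⟩ := integral_det_large_scale μ (hcd f hf) (hcs f) (hcd g hg) (hcs g)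
    hU.measurableSet (fun x hx => by simp [hfg x hx])
  obtain ⟨s, w, v, hv, hdet⟩ := exists_det_eq_sum E L₀
  have hexp : ∀ h : E → E, ContDiff ℝ 1 h → ∫ x in U, (fderiv ℝ h x).det ∂μ
      = ∑ i ∈ s, w i * ∫ x in U,
        (v i • ContinuousLinearMap.id ℝ E + fderiv ℝ (fun x => χ x • h x) x).det ∂μ := by
    intro h hh
    have hcoef : ∀ i, IntegrableOn (fun x =>
        (v i • ContinuousLinearMap.id ℝ E + fderiv ℝ (fun x => χ x • h x) x).det) U μ := by
      intro i
      have hc : Continuous fun x =>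
          (v i • ContinuousLinearMap.id ℝ E + fderiv ℝ (fun x => χ x • h x) x).det :=
        ContinuousLinearMap.continuous_det.comp
          (continuous_const.add ((hcd h hh).continuous_fderiv one_ne_zero))
      exact (hc.continuousOn.integrableOn_compact (isCompact_closedBall (0 : E) R)).mono_set hR
    simp_rw [← integral_const_mul]
    rw [← integral_finsetSum _ fun i _ => (hcoef i).const_mul _]
    refine setIntegral_congr_fun hU.measurableSet fun x hx => ?_
    rw [← hdet, hder h x hx]
  rw [hexp f hf, hexp g hg]
  exact Finset.sum_congr rfl fun i _ => by rw [hL _ (hv i)]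

/-! ### Degree of `C¹` maps by integration -/

/-- A map whose Jacobian is a bump function with positive integral: apply a smooth step function
to each coordinate. -/
theorem exists_profile (n : ℕ) :
    ∃ (P : EuclideanSpace ℝ (Fin n) → EuclideanSpace ℝ (Fin n)) (R : ℝ), ContDiff ℝ 1 P ∧
      0 < R ∧ (∀ y, R ≤ ‖y‖ → (fderiv ℝ P y).det = 0) ∧ 0 < ∫ y, (fderiv ℝ P y).det := by
  let e := EuclideanSpace.equiv (Fin n) ℝ
  let P : EuclideanSpace ℝ (Fin n) → EuclideanSpace ℝ (Fin n) :=
    fun y => e.symm fun i => smoothTransition (y i)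
  have hst : ContDiff ℝ 1 smoothTransition := by exact_mod_cast smoothTransition.contDiff (n := 1)
  have hP : ContDiff ℝ 1 P := by
    refine e.symm.contDiff.comp (contDiff_pi.2 fun i => hst.comp ?_)
    fun_prop
  have hdet : ∀ y, (fderiv ℝ P y).det = ∏ i, deriv smoothTransition (y i) := by
    intro y
    have h1 : HasFDerivAt (fun z : Fin n → ℝ => fun i => smoothTransition (z i))
        (ContinuousLinearMap.pi fun i =>
          (ContinuousLinearMap.toSpanSingleton ℝ (deriv smoothTransition (y i))) ∘L
            ContinuousLinearMap.proj i) (e y) := by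
      refine hasFDerivAt_pi.2 fun i => ?_
      have h2 : HasFDerivAt smoothTransition
          (ContinuousLinearMap.toSpanSingleton ℝ (deriv smoothTransition (y i))) (e y i) :=
        ((hst.differentiable one_ne_zero) (y i)).hasDerivAt.hasFDerivAt
      exact HasFDerivAt.comp (g := smoothTransition) (f := fun z : Fin n → ℝ => z i) (e y) h2
        (ContinuousLinearMap.proj (R := ℝ) (φ := fun _ : Fin n => ℝ) i).hasFDerivAt
    have h3 : HasFDerivAt P _ y :=
      e.symm.hasFDerivAt.comp y (h1.comp y e.hasFDerivAt)
    rw [h3.fderiv]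
    have h4 := LinearMap.det_conj (ContinuousLinearMap.pi fun i =>
          (ContinuousLinearMap.toSpanSingleton ℝ (deriv smoothTransition (y i))) ∘L
            ContinuousLinearMap.proj i : (Fin n → ℝ) →L[ℝ] (Fin n → ℝ)).toLinearMap
            e.symm.toLinearEquiv
    refine h4.trans ?_
    refine (ContinuousLinearMap.det_pi _).trans ?_
    refine Finset.prod_congr rfl fun i _ => ?_
    rw [ContinuousLinearMap.det, LinearMap.det_ring]
    simp
  have hz : ∀ s : ℝ, 1 < |s| → deriv smoothTransition s = 0 := by
    intro s hs
    rcases lt_abs.1 hs with h | h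
    · have : smoothTransition =ᶠ[nhds s] fun _ => (1 : ℝ) := by
        filter_upwards [lt_mem_nhds h] with x hx using smoothTransition.one_of_one_le hx.le
      rw [this.deriv_eq, deriv_const]
    · have : smoothTransition =ᶠ[nhds s] fun _ => (0 : ℝ) := by
        filter_upwards [gt_mem_nhds (show s < 0 by linarith)] with x hx
          using smoothTransition.zero_of_nonpos hx.le
      rw [this.deriv_eq, deriv_const]
  have hnn : ∀ s : ℝ, 0 ≤ deriv smoothTransition s := fun s => smoothTransition.monotone.deriv_nonneg
  have hvan : ∀ y, (n + 1 : ℝ) ≤ ‖y‖ → (fderiv ℝ P y).det = 0 := by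
    intro y hy
    rw [hdet]
    by_contra! hne
    have h1 : ∀ i, |y i| ≤ 1 := fun i => by
      by_contra! hi
      exact hne (Finset.prod_eq_zero (Finset.mem_univ i) (hz _ hi))
    have h2 : ‖y‖ ^ 2 ≤ n := by
      rw [EuclideanSpace.norm_sq_eq]
      calc ∑ i, ‖y i‖ ^ 2 ≤ ∑ i : Fin n, (1 : ℝ) :=
            Finset.sum_le_sum fun i _ => pow_le_one₀ (norm_nonneg _) (h1 i)
        _ = n := by simp
    nlinarith
  obtain ⟨s, hs⟩ : ∃ s, deriv smoothTransition s ≠ 0 := by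
    by_contra! h
    have := is_const_of_deriv_eq_zero (hst.differentiable one_ne_zero) h 0 1
    simp at this
  refine ⟨P, n + 1, hP, by positivity, hvan, ?_⟩
  refine Continuous.integral_pos_of_hasCompactSupport_nonneg_nonzero
    (x := e.symm fun _ => s) ?_ ?_ ?_ ?_
  · exact ContinuousLinearMap.continuous_det.comp (hP.continuous_fderiv one_ne_zero)
  · refine HasCompactSupport.of_support_subset_isCompact
      (isCompact_closedBall (0 : EuclideanSpace ℝ (Fin n)) (n + 1)) fun y hy => ?_
    by_contra h
    exact hy (hvan y (by simpa using (not_le.1 (by simpa using h)).le))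
  · intro y
    simp only [hdet, Pi.zero_apply]
    exact Finset.prod_nonneg fun i _ => hnn _
  · rw [hdet]
    exact Finset.prod_ne_zero_iff.2 fun i _ => hs

theorem det_fderiv_comp {E : Type*} [NormedAddCommGroup E] [NormedSpace ℝ E]
    {P H : E → E} (hP : ContDiff ℝ 1 P) (hH : ContDiff ℝ 1 H) (x : E) :
    (fderiv ℝ (fun x => P (H x)) x).det = (fderiv ℝ P (H x)).det * (fderiv ℝ H x).det := by
  have : fderiv ℝ (fun x => P (H x)) x = (fderiv ℝ P (H x)) ∘L (fderiv ℝ H x) :=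
    fderiv_comp x (hP.differentiable one_ne_zero _) (hH.differentiable one_ne_zero _)
  rw [this, ContinuousLinearMap.det, ContinuousLinearMap.toLinearMap_comp, LinearMap.det_comp]

/-- Homotopy invariance of the integral `∫_U ρ(G) det DG`, where `ρ = det DP` vanishes outside the
ball of radius `R`, along a straight-line homotopy that keeps `∂U` outside that ball. -/
theorem degree_homotopy {E : Type*} [NormedAddCommGroup E] [NormedSpace ℝ E]
    [FiniteDimensional ℝ E] [MeasurableSpace E] [BorelSpace E] (μ : Measure E)
    [μ.IsAddHaarMeasure] {P : E → E} {R : ℝ} (hP : ContDiff ℝ 1 P)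
    (hR : ∀ y, R ≤ ‖y‖ → (fderiv ℝ P y).det = 0) {U : Set E} (hU : IsOpen U)
    (hb : Bornology.IsBounded U) {G₀ G₁ : E → E} (h₀ : ContDiff ℝ 1 G₀) (h₁ : ContDiff ℝ 1 G₁)
    (hG : ∀ x ∈ frontier U, ∀ t ∈ Icc (0 : ℝ) 1, R < ‖G₀ x + t • (G₁ x - G₀ x)‖) :
    ∫ x in U, (fderiv ℝ (fun x => P (G₀ x)) x).det ∂μ
      = ∫ x in U, (fderiv ℝ (fun x => P (G₁ x)) x).det ∂μ := by
  have c₀ := h₀.continuous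
  have c₁ := h₁.continuous
  let Q : Set (E × ℝ) := (closure U ×ˢ Icc (0 : ℝ) 1) ∩
    {p | ‖G₀ p.1 + p.2 • (G₁ p.1 - G₀ p.1)‖ ≤ R}
  have hQ : IsCompact Q := by
    refine (hb.isCompact_closure.prod isCompact_Icc).inter_right (isClosed_le ?_ continuous_const)
    fun_prop
  have hK : IsClosed (Prod.fst '' Q) := (hQ.image continuous_fst).isClosed
  have hKU : Prod.fst '' Q ⊆ U := by
    rintro _ ⟨⟨x, t⟩, ⟨⟨hx, ht⟩, hle⟩, rfl⟩
    by_contra hxU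
    exact absurd hle (not_le.2 (hG x ⟨hx, by rwa [hU.interior_eq]⟩ t ht))
  obtain ⟨χ, hχ, χ1, χ0, χI⟩ := exists_cutoff hK hU hKU
  -- `G₂` agrees with `G₀` off `U`, and with `G₁` where the integrands do not vanish
  let G₂ : E → E := fun x => G₀ x + χ x • (G₁ x - G₀ x)
  have h₂ : ContDiff ℝ 1 G₂ := h₀.add (hχ.smul (h₁.sub h₀))
  have e1 := integral_det_fderiv_congr μ (f := fun x => P (G₀ x)) (g := fun x => P (G₂ x))
    (hP.comp h₀) (hP.comp h₂) hU hb (fun x hx => by simp [G₂, χ0 x hx])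
  rw [e1]
  refine setIntegral_congr_fun hU.measurableSet fun x hx => ?_
  by_cases hxK : x ∈ Prod.fst '' Q
  · have : (fun x => P (G₂ x)) =ᶠ[nhds x] fun x => P (G₁ x) := by
      filter_upwards [χ1 x hxK] with y hy
      simp [G₂, hy]
    simp only [this.fderiv_eq]
  · have hbig : ∀ t ∈ Icc (0 : ℝ) 1, R < ‖G₀ x + t • (G₁ x - G₀ x)‖ := by
      intro t ht
      by_contra! h
      exact hxK ⟨(x, t), ⟨⟨subset_closure hx, ht⟩, h⟩, rfl⟩
    have z2 : (fderiv ℝ P (G₂ x)).det = 0 := hR _ (hbig _ (χI x)).le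
    have z1 : (fderiv ℝ P (G₁ x)).det = 0 := hR _ (by simpa using (hbig 1 (by simp)).le)
    simp only [det_fderiv_comp hP h₂, det_fderiv_comp hP h₁, z1, z2, zero_mul]

/-- An orientation-preserving linear isomorphism, recentred at `x₀`, has degree one on a ball that
it maps onto a set containing the support of `ρ = det DP`. -/
theorem degree_affine {E : Type*} [NormedAddCommGroup E] [NormedSpace ℝ E]
    [FiniteDimensional ℝ E] [MeasurableSpace E] [BorelSpace E] (μ : Measure E)
    [μ.IsAddHaarMeasure] {P : E → E} {R : ℝ} (hP : ContDiff ℝ 1 P)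
    (hR : ∀ y, R ≤ ‖y‖ → (fderiv ℝ P y).det = 0) {T : E →L[ℝ] E} (hT : 0 < T.det)
    (x₀ : E) {δ : ℝ} (hTδ : ∀ h, δ ≤ ‖h‖ → R ≤ ‖T h‖) :
    ∫ x in Metric.ball x₀ δ, (fderiv ℝ (fun x => P (T (x - x₀))) x).det ∂μ
      = ∫ y, (fderiv ℝ P y).det ∂μ := by
  have hH : ContDiff ℝ 1 fun x => T (x - x₀) := T.contDiff.comp (contDiff_id.sub contDiff_const)
  have hd : ∀ x, fderiv ℝ (fun x => T (x - x₀)) x = T := fun x => by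
    have : HasFDerivAt (fun x => T (x - x₀)) (T ∘L ContinuousLinearMap.id ℝ E) x :=
      T.hasFDerivAt.comp x ((hasFDerivAt_id x).sub_const x₀)
    simpa using this.fderiv
  simp_rw [det_fderiv_comp hP hH, hd]
  rw [setIntegral_eq_integral_of_forall_compl_eq_zero,
    integral_sub_right_eq_self (fun x => (fderiv ℝ P (T x)).det * T.det)]
  · have hbij : Function.Bijective T :=
      ((T : E →ₗ[ℝ] E).equivOfDetNeZero hT.ne').bijective
    have := integral_image_eq_integral_abs_det_fderiv_smul μ (f := T) (f' := fun _ => T)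
      MeasurableSet.univ (fun x _ => T.hasFDerivAt.hasFDerivWithinAt) hbij.1.injOn
      (fun y => (fderiv ℝ P y).det)
    rw [image_univ, hbij.2.range_eq] at this
    simp only [Measure.restrict_univ, abs_of_pos hT, smul_eq_mul] at this
    rw [this]
    simp_rw [mul_comm]
  · intro x hx
    rw [hR _ (hTδ _ _), zero_mul]
    simpa [dist_eq_norm] using hx

/-! ### Counting preimages by the degree -/

open Filter Topology in
theorem eventually_closedBall {E : Type*} [PseudoMetricSpace E] {x : E} {p : E → Prop}
    (h : ∀ᶠ z in 𝓝 x, p z) : ∀ᶠ δ in 𝓝[>] (0 : ℝ), ∀ z ∈ Metric.closedBall x δ, p z := by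
  obtain ⟨ε, hε, hp⟩ := Metric.nhds_basis_closedBall.eventually_iff.1 h
  filter_upwards [Ioc_mem_nhdsGT hε] with δ hδ z hz
  exact hp (Metric.closedBall_subset_closedBall hδ.2 hz)

open Filter Topology in
/-- If `F` is differentiable with positive Jacobian at every preimage of `y`, the preimages are
finitely many, and for every `C¹` map `H` uniformly close to `F` the degree of `H` at `y`, computed
with the bump `ρ = det DP` concentrated at scale `1 / L`, is the number of preimages of `y` under
`F`: outside small balls around these the integrand vanishes, and on each of them `H` is homotopic
to the linearization of `F`. -/
theorem degree_eq_ncard_fiber {E : Type*} [NormedAddCommGroup E] [NormedSpace ℝ E]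
    [FiniteDimensional ℝ E] [MeasurableSpace E] [BorelSpace E] (μ : Measure E)
    [μ.IsAddHaarMeasure] {P : E → E} {R : ℝ} (hP : ContDiff ℝ 1 P) (hR0 : 0 < R)
    (hR : ∀ y, R ≤ ‖y‖ → (fderiv ℝ P y).det = 0) {Ω : Set E} (hΩ : IsOpen Ω)
    (hb : Bornology.IsBounded Ω) {F : E → E} (hF : ContinuousOn F (closure Ω)) {y : E}
    (hy : ∀ x ∈ closure Ω, F x = y → x ∈ Ω ∧ ∃ A : E →L[ℝ] E, HasFDerivAt F A x ∧ 0 < A.det) :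
    (F ⁻¹' {y} ∩ Ω).Finite ∧ ∃ η > 0, ∃ L₀ : ℝ, ∀ H : E → E, ContDiff ℝ 1 H →
      (∀ x ∈ closure Ω, ‖H x - F x‖ ≤ η) → ∀ L ≥ L₀,
        ∫ x in Ω, (fderiv ℝ (fun x => P (L • (H x - y))) x).det ∂μ
          = (F ⁻¹' {y} ∩ Ω).ncard * ∫ z, (fderiv ℝ P z).det ∂μ := by
  set X := F ⁻¹' {y} ∩ Ω with hX
  have hmem : ∀ x ∈ X, F x = y ∧ x ∈ Ω := fun x hx => hx
  choose A hA using fun x : X => (hy x (subset_closure (hmem x x.2).2) (hmem x x.2).1).2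
  have hanti : ∀ x : X, ∃ K > 0, AntilipschitzWith K (A x) := fun x => by
    refine LinearMap.exists_antilipschitzWith (A x : E →ₗ[ℝ] E) ?_
    exact LinearMap.ker_eq_bot.2 (LinearMap.equivOfDetNeZero _ (hA x).2.ne').injective
  have hfin : X.Finite := by
    have hXc : IsCompact X := by
      have : X = closure Ω ∩ F ⁻¹' {y} := by
        ext x
        exact ⟨fun h => ⟨subset_closure h.2, h.1⟩, fun h => ⟨h.2, (hy x h.1 h.2).1⟩⟩
      rw [this]
      exact hb.isCompact_closure.of_isClosed_subset
        (hF.preimage_isClosed_of_isClosed isClosed_closure isClosed_singleton) inter_subset_left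
    refine hXc.finite (isDiscrete_iff_nhdsNE.2 fun x hx => ?_)
    obtain ⟨K, -, hK⟩ := hanti ⟨x, hx⟩
    have := (hA ⟨x, hx⟩).1.eventually_ne (c := y) ⟨K, hK⟩
    rw [inf_principal_eq_bot]
    filter_upwards [this] with z hz hzX using hz (hmem z hzX).1
  refine ⟨hfin, ?_⟩
  have := hfin.to_subtype
  -- a common lower bound for the derivatives at the preimages
  obtain ⟨c, hc, hc0⟩ : ∃ c : ℝ, (∀ x : X, ∀ h, c * ‖h‖ ≤ ‖A x h‖) ∧ 0 < c := by
    have : ∀ᶠ c in 𝓝[>] (0 : ℝ), ∀ x : X, ∀ h, c * ‖h‖ ≤ ‖A x h‖ := by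
      refine eventually_all.2 fun x => ?_
      obtain ⟨K, hK0, hK⟩ := hanti x
      filter_upwards [Ioc_mem_nhdsGT (show (0 : ℝ) < (K : ℝ)⁻¹ by positivity)] with c hc h
      have h1 : ‖h‖ ≤ K * ‖A x h‖ := by simpa using hK.le_mul_dist h 0
      calc c * ‖h‖ ≤ (K : ℝ)⁻¹ * (K * ‖A x h‖) :=
            mul_le_mul hc.2 h1 (norm_nonneg _) (by positivity)
        _ = ‖A x h‖ := by
          rw [← mul_assoc, inv_mul_cancel₀ (by positivity), one_mul]
    exact (this.and self_mem_nhdsWithin).exists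
  -- a common radius of disjoint balls on which `F` is close to its linearizations
  obtain ⟨δ, ⟨hδΩ, hδF, hδd⟩, hδ0⟩ : ∃ δ : ℝ, ((∀ x : X, ∀ z ∈ Metric.closedBall (x : E) δ, z ∈ Ω) ∧
      (∀ x : X, ∀ z ∈ Metric.closedBall (x : E) δ,
        ‖F z - F x - A x (z - x)‖ ≤ c / 4 * ‖z - x‖) ∧
      (∀ x x' : X, x ≠ x' → Disjoint (Metric.ball (x : E) δ) (Metric.ball (x' : E) δ))) ∧ 0 < δ := by
    refine Eventually.exists (f := 𝓝[>] (0 : ℝ)) (.and (.and ?_ (.and ?_ ?_)) self_mem_nhdsWithin)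
    · exact eventually_all.2 fun x =>
        eventually_closedBall (hΩ.mem_nhds (hmem x x.2).2)
    · exact eventually_all.2 fun x =>
        eventually_closedBall ((hA x).1.isLittleO.def (by positivity))
    · refine eventually_all.2 fun x => eventually_all.2 fun x' => ?_
      by_cases hxx : x = x'
      · simp [hxx]
      have : 0 < dist (x : E) x' := dist_pos.2 fun h => hxx (Subtype.ext h)
      filter_upwards [Ioc_mem_nhdsGT (half_pos this)] with δ hδ _
      exact Metric.ball_disjoint_ball (by linarith [hδ.2])
  obtain ⟨η₀, hη₀, hη₀'⟩ : ∃ η₀ : ℝ, 0 < η₀ ∧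
      ∀ z ∈ closure Ω \ ⋃ x : X, Metric.ball (x : E) δ, η₀ ≤ ‖F z - y‖ := by
    refine IsCompact.exists_forall_le' (hb.isCompact_closure.diff
      (isOpen_iUnion fun _ => Metric.isOpen_ball)) ?_ fun z hz => ?_
    · exact ((hF.mono sdiff_subset).sub continuousOn_const).norm
    · refine norm_pos_iff.2 fun h => hz.2 ?_
      have hzy : F z = y := sub_eq_zero.1 h
      exact mem_iUnion.2 ⟨⟨z, hzy, (hy z hz.1 hzy).1⟩, Metric.mem_ball_self hδ0⟩
  refine ⟨min (η₀ / 2) (c * δ / 4), by positivity, 2 * R / η₀ + 4 * R / (c * δ), ?_⟩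
  intro H hH hHF L hL
  have hq1 : 0 < 2 * R / η₀ := by positivity
  have hq2 : 0 < 4 * R / (c * δ) := by positivity
  have hL0 : 0 < L := by linarith
  have hL1 : R ≤ L * (η₀ / 2) := by
    have : 2 * R / η₀ ≤ L := by linarith
    rw [div_le_iff₀ hη₀] at this; linarith
  have hL2 : 2 * R ≤ L * (c * δ / 2) := by
    have : 4 * R / (c * δ) ≤ L := by linarith
    rw [div_le_iff₀ (by positivity)] at this; linarith
  have hG : ContDiff ℝ 1 fun x => L • (H x - y) := (hH.sub contDiff_const).const_smul L
  have hcont : Continuous fun x => (fderiv ℝ (fun x => P (L • (H x - y))) x).det :=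
    ContinuousLinearMap.continuous_det.comp ((hP.comp hG).continuous_fderiv one_ne_zero)
  rw [setIntegral_eq_of_subset_of_forall_sdiff_eq_zero (s := ⋃ x : X, Metric.ball (x : E) δ)
    hΩ.measurableSet (iUnion_subset fun x z hz => hδΩ x z (Metric.ball_subset_closedBall hz))]
  · have := Fintype.ofFinite X
    rw [integral_iUnion_fintype (fun _ => measurableSet_ball) (fun x x' h => hδd x x' h)
      (fun x => (hcont.continuousOn.integrableOn_compact
        (isCompact_closedBall (x : E) δ)).mono_set Metric.ball_subset_closedBall)]
    have hone : ∀ x : X, ∫ z in Metric.ball (x : E) δ,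
        (fderiv ℝ (fun x => P (L • (H x - y))) z).det ∂μ = ∫ z, (fderiv ℝ P z).det ∂μ := by
      intro x
      have hTdet : 0 < (L • A x).det := by
        rw [ContinuousLinearMap.det, ContinuousLinearMap.toLinearMap_smul, LinearMap.det_smul]
        exact mul_pos (pow_pos hL0 _) (hA x).2
      have hTG : ContDiff ℝ 1 fun z => (L • A x) (z - x) :=
        (L • A x).contDiff.comp (contDiff_id.sub contDiff_const)
      have hTn : ∀ h, δ ≤ ‖h‖ → 2 * R ≤ ‖(L • A x) h‖ / 2 := by
        intro h hh
        rw [smul_apply, norm_smul, Real.norm_of_nonneg hL0.le]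
        have := hc x h
        have h3 : c * δ ≤ ‖A x h‖ := (mul_le_mul_of_nonneg_left hh hc0.le).trans this
        have := mul_le_mul_of_nonneg_left h3 hL0.le
        linarith
      rw [← degree_affine μ hP hR hTdet (x : E) (δ := δ) (fun h hh => by
        linarith [hTn h hh])]
      refine (degree_homotopy μ hP hR Metric.isOpen_ball Metric.isBounded_ball hTG hG ?_).symm
      intro z hz t ht
      have hzδ : ‖z - x‖ = δ := by
        have := Metric.frontier_ball_subset_sphere hz
        simpa [dist_eq_norm] using this
      have hzb : z ∈ Metric.closedBall (x : E) δ := by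
        rw [Metric.mem_closedBall, dist_eq_norm, hzδ]
      have e1 : ‖F z - F x - A x (z - x)‖ ≤ c * δ / 4 := by
        have := hδF x z hzb; rw [hzδ] at this; linarith
      have e2 : ‖H z - F z‖ ≤ c * δ / 4 :=
        (hHF z (subset_closure (hδΩ x z hzb))).trans (min_le_right _ _)
      have e3 : L • (H z - y) - (L • A x) (z - x)
          = L • ((H z - F z) + (F z - F x - A x (z - x))) := by
        rw [(hmem x x.2).1, smul_apply, ← smul_sub]
        congr 1; abel
      have e4 : ‖t • (L • (H z - y) - (L • A x) (z - x))‖ ≤ L * (c * δ / 2) := by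
        rw [e3, norm_smul, norm_smul, Real.norm_of_nonneg ht.1, Real.norm_of_nonneg hL0.le]
        have : ‖(H z - F z) + (F z - F x - A x (z - x))‖ ≤ c * δ / 2 :=
          (norm_add_le _ _).trans (by linarith)
        calc t * (L * ‖(H z - F z) + (F z - F x - A x (z - x))‖)
            ≤ 1 * (L * (c * δ / 2)) := by
              refine mul_le_mul ht.2 (mul_le_mul_of_nonneg_left this hL0.le) (by positivity) zero_le_one
          _ = _ := one_mul _
      have e5 : L * (c * δ) ≤ ‖(L • A x) (z - x)‖ := by
        rw [smul_apply, norm_smul, Real.norm_of_nonneg hL0.le]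
        refine mul_le_mul_of_nonneg_left ?_ hL0.le
        rw [← hzδ]; exact hc x _
      have e6 := norm_sub_le_norm_add ((L • A x) (z - x)) (t • (L • (H z - y) - (L • A x) (z - x)))
      linarith
    simp only [hone, Finset.sum_const, nsmul_eq_mul, Finset.card_univ]
    rw [← Nat.card_eq_fintype_card]
    rfl
  · intro z hz
    rw [det_fderiv_comp hP hG, hR, zero_mul]
    have h1 := hη₀' z ⟨subset_closure hz.1, hz.2⟩
    have h2 := (hHF z (subset_closure hz.1)).trans (min_le_left _ _)
    rw [norm_smul, Real.norm_of_nonneg hL0.le]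
    have h3 : η₀ / 2 ≤ ‖H z - y‖ := by
      have : ‖F z - y‖ ≤ ‖H z - F z‖ + ‖H z - y‖ := by
        rw [norm_sub_rev (H z) (F z)]
        exact norm_sub_le_norm_sub_add_norm_sub _ _ _
      linarith
    exact hL1.trans (mul_le_mul_of_nonneg_left h3 hL0.le)

theorem exists_smooth_approx {E : Type*} [NormedAddCommGroup E] [NormedSpace ℝ E]
    [FiniteDimensional ℝ E] {K : Set E} (hK : IsClosed K) {F : E → E} (hF : ContinuousOn F K)
    {η : ℝ} (hη : 0 < η) : ∃ H : E → E, ContDiff ℝ 1 H ∧ ∀ x ∈ K, ‖H x - F x‖ ≤ η := by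
  have : TietzeExtension E := TietzeExtension.of_tvs ℝ
  obtain ⟨g, hg⟩ := ContinuousMap.exists_restrict_eq hK ⟨K.domRestrict F, hF.domRestrict⟩
  obtain ⟨H, hH, hd, -⟩ := g.continuous.exists_contDiff_approx 1 (ε := fun _ => η)
    continuous_const (fun _ => hη)
  refine ⟨H, by exact_mod_cast hH, fun x hx => ?_⟩
  have : g x = F x := congrArg (fun f : C(K, E) => f ⟨x, hx⟩) hg
  rw [← this, ← dist_eq_norm]
  exact (hd x).le

/-- Near a point at positive distance from `F(∂Ω)` all good values are taken the same number of
times: the degrees of approximations of `F`, at any scale and with any nearby target, are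
connected by homotopies. -/
theorem exists_multiplicity_on_ball {n : ℕ}
    {Ω : Set (EuclideanSpace ℝ (Fin n))} (hΩ : IsOpen Ω) (hb : Bornology.IsBounded Ω)
    {F : EuclideanSpace ℝ (Fin n) → EuclideanSpace ℝ (Fin n)} (hF : ContinuousOn F (closure Ω))
    {y₀ : EuclideanSpace ℝ (Fin n)} {r : ℝ} (hr : 0 < r)
    (hfr : ∀ x ∈ frontier Ω, 4 * r ≤ ‖F x - y₀‖) :
    ∃ k : ℝ, ∀ y ∈ Metric.ball y₀ r,
      (∀ x ∈ Ω, F x = y → ∃ A : EuclideanSpace ℝ (Fin n) →L[ℝ] EuclideanSpace ℝ (Fin n),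
        HasFDerivAt F A x ∧ 0 < A.det) →
      (F ⁻¹' {y} ∩ Ω).Finite ∧ ((F ⁻¹' {y} ∩ Ω).ncard : ℝ) = k := by
  obtain ⟨P, R, hP, hR0, hR, hI⟩ := exists_profile n
  obtain ⟨G, hG, hGF⟩ := exists_smooth_approx isClosed_closure hF hr
  refine ⟨(∫ x in Ω, (fderiv ℝ (fun x => P ((R / r) • (G x - y₀))) x).det) /
    ∫ y, (fderiv ℝ P y).det, fun y hy hgood => ?_⟩
  have hyr : ‖y₀ - y‖ < r := by rw [norm_sub_rev, ← dist_eq_norm]; exact hy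
  obtain ⟨hfin, η, hη, L₀, hcount⟩ := degree_eq_ncard_fiber volume hP hR0 hR hΩ hb hF (y := y) (by
    intro x hx hxy
    have hxΩ : x ∈ Ω := by
      by_contra h
      have := hfr x ⟨hx, by rwa [hΩ.interior_eq]⟩
      rw [hxy, norm_sub_rev] at this
      linarith
    exact ⟨hxΩ, hgood x hxΩ hxy⟩)
  refine ⟨hfin, ?_⟩
  rw [eq_div_iff hI.ne']
  obtain ⟨H, hH, hHF⟩ := exists_smooth_approx isClosed_closure hF (lt_min hη hr)
  set L := max L₀ (R / r) with hL
  have hRr : 0 < R / r := by positivity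
  have hLR : R / r ≤ L := le_max_right _ _
  rw [← hcount H hH (fun x hx => (hHF x hx).trans (min_le_left _ _)) L (le_max_left _ _)]
  refine (degree_homotopy volume hP hR hΩ hb ((hG.sub contDiff_const).const_smul (R / r))
    ((hH.sub contDiff_const).const_smul L) ?_).symm
  intro x hx t ht
  -- the homotopy at `x` is a multiple `s • (F x - y₀)` up to an error of size `2 * r * s`
  set s := (1 - t) * (R / r) + t * L with hs
  have hsR : R / r ≤ s := by nlinarith [ht.1, ht.2]
  have hxc : x ∈ closure Ω := frontier_subset_closure hx
  have hdecomp : (R / r) • (G x - y₀) + t • (L • (H x - y) - (R / r) • (G x - y₀))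
      = s • (F x - y₀) + (((1 - t) * (R / r)) • (G x - F x) +
        (t * L) • ((H x - F x) + (y₀ - y))) := by
    rw [hs]; module
  have e1 : ‖((1 - t) * (R / r)) • (G x - F x)‖ ≤ (1 - t) * (R / r) * r := by
    have h0 : 0 ≤ (1 - t) * (R / r) := mul_nonneg (by linarith [ht.2]) hRr.le
    rw [norm_smul, Real.norm_of_nonneg h0]
    exact mul_le_mul_of_nonneg_left (hGF x hxc) h0
  have e2 : ‖(t * L) • ((H x - F x) + (y₀ - y))‖ ≤ t * L * (2 * r) := by
    have h0 : 0 ≤ t * L := mul_nonneg ht.1 (by linarith)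
    rw [norm_smul, Real.norm_of_nonneg h0]
    refine mul_le_mul_of_nonneg_left ((norm_add_le _ _).trans ?_) h0
    linarith [(hHF x hxc).trans (min_le_right _ _)]
  have e3 : s * (4 * r) ≤ ‖s • (F x - y₀)‖ := by
    rw [norm_smul, Real.norm_of_nonneg (hRr.le.trans hsR)]
    exact mul_le_mul_of_nonneg_left (hfr x hx) (hRr.le.trans hsR)
  have e4 := norm_add_le (((1 - t) * (R / r)) • (G x - F x)) ((t * L) • ((H x - F x) + (y₀ - y)))
  have e5 := norm_sub_le_norm_add (s • (F x - y₀)) (((1 - t) * (R / r)) • (G x - F x) +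
        (t * L) • ((H x - F x) + (y₀ - y)))
  have e6 : R ≤ s * r := by rwa [div_le_iff₀ hr] at hsR
  have e7 : 0 ≤ (1 - t) * (R / r) * r :=
    mul_nonneg (mul_nonneg (by linarith [ht.2]) hRr.le) hr.le
  have e8 : s * r = (1 - t) * (R / r) * r + t * L * r := by rw [hs]; ring
  rw [hdecomp]
  nlinarith

/-! ### Area formula -/

/-- The area formula for a map with positive Jacobian on `S`, whose fibres in `S` have exactly `k`
points over almost every `y` with `w y ≠ 0`: split `S` into countably many pieces on which `f` is
injective. -/
theorem lintegral_det_mul_comp_of_encard_fiber {E : Type*} [NormedAddCommGroup E]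
    [NormedSpace ℝ E] [FiniteDimensional ℝ E] [MeasurableSpace E] [BorelSpace E] (μ : Measure E)
    [μ.IsAddHaarMeasure] {S : Set E} (hS : MeasurableSet S) {f : E → E} {f' : E → E →L[ℝ] E}
    (hf : ∀ x ∈ S, HasFDerivAt f (f' x) x) (hdet : ∀ x ∈ S, 0 < (f' x).det) {w : E → ℝ≥0∞}
    (hw : Measurable w) {k : ℕ} (hk : ∀ᵐ y ∂μ, w y ≠ 0 → (f ⁻¹' {y} ∩ S).encard = k) :
    ∫⁻ x in S, ENNReal.ofReal (f' x).det * w (f x) ∂μ = k * ∫⁻ y, w y ∂μ := by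
  classical
  -- a tolerance below which approximating an invertible map forces injectivity
  have hex : ∀ A : E →L[ℝ] E, ∃ c : NNReal, c ≠ 0 ∧ (A.det ≠ 0 → ∀ s : Set E,
      ApproximatesLinearOn f A s c → InjOn f s) := by
    intro A
    by_cases h : A.det ≠ 0
    · obtain ⟨K, hK0, hK⟩ := LinearMap.exists_antilipschitzWith (A : E →ₗ[ℝ] E)
        (LinearMap.ker_eq_bot.2 (LinearMap.equivOfDetNeZero _ h).injective)
      refine ⟨K⁻¹ / 2, by positivity, fun _ s hs x hx y hy hxy => ?_⟩
      have h1 : ‖A (x - y)‖ ≤ (K : ℝ)⁻¹ / 2 * ‖x - y‖ := by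
        have := hs x hx y hy
        rwa [hxy, sub_self, zero_sub, norm_neg] at this
      have h2 : ‖x - y‖ ≤ K * ‖A (x - y)‖ := by simpa using hK.le_mul_dist (x - y) 0
      have h3 : (K : ℝ) * ‖A (x - y)‖ ≤ K * ((K : ℝ)⁻¹ / 2 * ‖x - y‖) :=
        mul_le_mul_of_nonneg_left h1 K.2
      have h4 : (K : ℝ) * ((K : ℝ)⁻¹ / 2 * ‖x - y‖) = ‖x - y‖ / 2 := by
        have : (K : ℝ) ≠ 0 := by positivity
        field_simp
      have : ‖x - y‖ ≤ 0 := by linarith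
      exact sub_eq_zero.1 (norm_le_zero_iff.1 this)
    · exact ⟨1, one_ne_zero, fun h' => absurd h' h⟩
  choose tol htol hinj using hex
  obtain ⟨t, A, htd, htm, hSt, happ, hA⟩ :=
    exists_partition_approximatesLinearOn_of_hasFDerivWithinAt f S f'
      (fun x hx => (hf x hx).hasFDerivWithinAt) tol htol
  have hpm : ∀ j, MeasurableSet (S ∩ t j) := fun j => hS.inter (htm j)
  have hpd : ∀ j, ∀ x ∈ S ∩ t j, HasFDerivWithinAt f (f' x) (S ∩ t j) x :=
    fun j x hx => (hf x hx.1).hasFDerivWithinAt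
  have hpi : ∀ j, InjOn f (S ∩ t j) := by
    intro j x hx
    obtain ⟨z, hz, hAz⟩ := hA ⟨x, hx.1⟩ j
    exact hinj _ (by rw [hAz]; exact (hdet z hz).ne') _ (happ j) hx
  have him : ∀ j, MeasurableSet (f '' (S ∩ t j)) := fun j =>
    measurable_image_of_fderivWithin (hpm j) (hpd j) (hpi j)
  have hcover : S = ⋃ j, S ∩ t j := by
    rw [← inter_iUnion, inter_eq_left.2 hSt]
  have hdisj : Pairwise (Function.onFun Disjoint fun j => S ∩ t j) := fun i j hij =>
    (htd hij).mono inter_subset_right inter_subset_right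
  calc ∫⁻ x in S, ENNReal.ofReal (f' x).det * w (f x) ∂μ
      = ∑' j, ∫⁻ x in S ∩ t j, ENNReal.ofReal (f' x).det * w (f x) ∂μ := by
        conv_lhs => rw [hcover]
        exact lintegral_iUnion hpm hdisj _
    _ = ∑' j, ∫⁻ y, (f '' (S ∩ t j)).indicator w y ∂μ := by
        refine tsum_congr fun j => ?_
        rw [lintegral_indicator (him j),
          lintegral_image_eq_lintegral_abs_det_fderiv_mul μ (hpm j) (hpd j) (hpi j)]
        refine setLIntegral_congr_fun (hpm j) fun x hx => ?_
        simp only [abs_of_pos (hdet x hx.1)]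
    _ = ∫⁻ y, ∑' j, (f '' (S ∩ t j)).indicator w y ∂μ :=
        (lintegral_tsum fun j => (hw.indicator (him j)).aemeasurable).symm
    _ = ∫⁻ y, k * w y ∂μ := by
        refine lintegral_congr_ae ?_
        filter_upwards [hk] with y hy
        by_cases hwy : w y = 0
        · simp [indicator_apply, hwy]
        -- the pieces whose image contains `y` correspond to the points of the fibre
        let J : Set ℕ := {j | y ∈ f '' (S ∩ t j)}
        have hJ : J.encard = k := by
          rw [← hy hwy]
          have hidx : ∀ x ∈ S, ∃ j, x ∈ t j := fun x hx => mem_iUnion.1 (hSt hx)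
          choose! idx hidx using hidx
          have huniq : ∀ x ∈ S, ∀ j, x ∈ t j → idx x = j := by
            intro x hx j hj
            by_contra hne
            exact disjoint_left.1 (htd hne) (hidx x hx) hj
          have himg : J = idx '' (f ⁻¹' {y} ∩ S) := by
            ext j
            constructor
            · rintro ⟨x, ⟨hxS, hxj⟩, hxy⟩
              exact ⟨x, ⟨hxy, hxS⟩, huniq x hxS j hxj⟩
            · rintro ⟨x, ⟨hxy, hxS⟩, rfl⟩
              exact ⟨x, ⟨hxS, hidx x hxS⟩, hxy⟩
          rw [himg]
          refine InjOn.encard_image fun x hx x' hx' hxx => ?_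
          refine hpi (idx x) ⟨hx.2, hidx x hx.2⟩ ⟨hx'.2, hxx ▸ hidx x' hx'.2⟩ ?_
          exact (show f x = y from hx.1).trans (show f x' = y from hx'.1).symm
        have h1 : ∀ j, (f '' (S ∩ t j)).indicator w y = J.indicator (fun _ => w y) j := fun j => by
          by_cases hj : y ∈ f '' (S ∩ t j)
          · rw [indicator_of_mem hj, indicator_of_mem (show j ∈ J from hj)]
          · rw [indicator_of_notMem hj, indicator_of_notMem (show j ∉ J from hj)]
        simp_rw [h1]
        rw [← tsum_subtype, ENNReal.tsum_set_const, hJ]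
        simp
    _ = k * ∫⁻ y, w y ∂μ := lintegral_const_mul _ hw

/-! ### Multiplicity and degree -/

/-- Multiplicity equals degree a.e.: under the hypotheses of the degree
identity, for every connected component `V` of `ℝⁿ \ F(∂Ω)` contained in
`F(Ω)`, the multiplicity function `N(F,Ω,y) = #(F⁻¹(y) ∩ Ω)` equals the degree
`d` of `F` on `V` for almost every `y ∈ V`. -/
theorem stmt19 (n : ℕ) (hn : 2 ≤ n)
    (Ω : Set (EuclideanSpace ℝ (Fin n))) (hΩ : IsOpen Ω)
    (hcon : IsConnected Ω) (hb : Bornology.IsBounded Ω)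
    (F : EuclideanSpace ℝ (Fin n) → EuclideanSpace ℝ (Fin n))
    (hFc : ContinuousOn F (closure Ω))
    (DF : EuclideanSpace ℝ (Fin n) →
      (EuclideanSpace ℝ (Fin n) →L[ℝ] EuclideanSpace ℝ (Fin n)))
    (hdiff : ∀ᵐ x ∂(volume.restrict Ω), HasFDerivAt F (DF x) x)
    (hJnn : ∀ᵐ x ∂(volume.restrict Ω), 0 ≤ (DF x).det)
    (hLusinN : ∀ A : Set (EuclideanSpace ℝ (Fin n)),
      A ⊆ Ω → volume A = 0 → volume (F '' A) = 0)
    (V : Set (EuclideanSpace ℝ (Fin n)))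
    (hV : ∃ p ∈ (F '' frontier Ω)ᶜ, V = connectedComponentIn ((F '' frontier Ω)ᶜ) p)
    (hVim : V ⊆ F '' Ω)
    (d : ℤ)
    (hd : ∀ ρ : EuclideanSpace ℝ (Fin n) → ℝ, ContDiff ℝ (⊤ : ℕ∞) ρ →
      HasCompactSupport ρ → tsupport ρ ⊆ V → (∫ y, ρ y) = 1 →
      (d : ℝ) = ∫ x in Ω, ρ (F x) * (DF x).det) :
    ∀ᵐ y ∂(volume.restrict V),
      (F ⁻¹' {y} ∩ Ω).Finite ∧ ((F ⁻¹' {y} ∩ Ω).ncard : ℤ) = d := by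
  have hfr_c : IsCompact (F '' frontier Ω) :=
    (hb.isCompact_closure.of_isClosed_subset isClosed_frontier
      frontier_subset_closure).image_of_continuousOn (hFc.mono frontier_subset_closure)
  have hVo : IsOpen V := by
    obtain ⟨p, -, rfl⟩ := hV
    exact hfr_c.isClosed.isOpen_compl.connectedComponentIn
  have hVsub : V ⊆ (F '' frontier Ω)ᶜ := by
    obtain ⟨p, -, rfl⟩ := hV
    exact connectedComponentIn_subset _ _
  have hdet_cont : Continuous fun A : EuclideanSpace ℝ (Fin n) →L[ℝ] EuclideanSpace ℝ (Fin n) =>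
      A.det := ContinuousLinearMap.continuous_det
  have hdet_meas : Measurable fun x => (fderiv ℝ F x).det :=
    hdet_cont.measurable.comp (measurable_fderiv ℝ F)
  let S : Set (EuclideanSpace ℝ (Fin n)) :=
    {x | x ∈ Ω ∧ DifferentiableAt ℝ F x ∧ 0 < (fderiv ℝ F x).det}
  have hSm : MeasurableSet S :=
    hΩ.measurableSet.inter ((measurableSet_of_differentiableAt ℝ F).inter
      (measurableSet_lt measurable_const hdet_meas))
  have hSΩ : S ⊆ Ω := fun x hx => hx.1
  -- the values taken at bad points are negligible: Lusin's condition and Sard's lemma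
  have hbad : volume (F '' (Ω \ S)) = 0 := by
    let N₀ : Set (EuclideanSpace ℝ (Fin n)) :=
      {x | x ∈ Ω ∧ ¬ (HasFDerivAt F (DF x) x ∧ 0 ≤ (DF x).det)}
    have hN₀ : volume N₀ = 0 := by
      have h := (ae_restrict_iff' hΩ.measurableSet).1 (hdiff.and hJnn)
      refine measure_mono_null (fun x hx => ?_) (ae_iff.1 h)
      simpa [N₀] using hx
    let Z : Set (EuclideanSpace ℝ (Fin n)) :=
      {x | DifferentiableAt ℝ F x ∧ (fderiv ℝ F x).det = 0}
    have hZ : volume (F '' Z) = 0 :=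
      addHaar_image_eq_zero_of_det_fderivWithin_eq_zero volume (f' := fderiv ℝ F)
        (fun x hx => hx.1.hasFDerivAt.hasFDerivWithinAt) (fun x hx => hx.2)
    refine measure_mono_null ?_ (measure_union_null (hLusinN N₀ (fun x hx => hx.1) hN₀) hZ)
    rw [← image_union]
    refine image_mono fun x hx => ?_
    by_cases hx0 : x ∈ N₀
    · exact Or.inl hx0
    · have hx1 : HasFDerivAt F (DF x) x ∧ 0 ≤ (DF x).det := by
        by_contra h
        exact hx0 ⟨hx.1, h⟩
      refine Or.inr ⟨hx1.1.differentiableAt, le_antisymm ?_ (by rw [hx1.1.fderiv]; exact hx1.2)⟩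
      by_contra! h
      exact hx.2 ⟨hx.1, hx1.1.differentiableAt, h⟩
  have hgood_ae : ∀ᵐ y, y ∉ F '' (Ω \ S) := measure_eq_zero_iff_ae_notMem.1 hbad
  have hfib : ∀ y ∉ F '' (Ω \ S), F ⁻¹' {y} ∩ Ω = F ⁻¹' {y} ∩ S := by
    intro y hy
    refine subset_antisymm (fun x hx => ⟨hx.1, ?_⟩) (inter_subset_inter_right _ hSΩ)
    by_contra h
    exact hy ⟨x, ⟨hx.2, h⟩, hx.1⟩
  -- the claim on a small ball around each point of `V`
  have hlocal : ∀ y₀ ∈ V, ∃ r > 0, ∀ y ∈ Metric.ball y₀ r, y ∉ F '' (Ω \ S) →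
      (F ⁻¹' {y} ∩ Ω).Finite ∧ ((F ⁻¹' {y} ∩ Ω).ncard : ℤ) = d := by
    intro y₀ hy₀
    obtain ⟨ε, hε, hεV⟩ := Metric.isOpen_iff.1 hVo y₀ hy₀
    have hr : 0 < ε / 4 := by positivity
    obtain ⟨k, hk⟩ := exists_multiplicity_on_ball hΩ hb hFc (y₀ := y₀) hr (by
      intro x hx
      by_contra! h
      refine hVsub (hεV (?_ : F x ∈ Metric.ball y₀ ε)) ⟨x, hx, rfl⟩
      rw [Metric.mem_ball, dist_eq_norm]
      linarith)
    refine ⟨ε / 4, hr, ?_⟩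
    have hk' : ∀ y ∈ Metric.ball y₀ (ε / 4), y ∉ F '' (Ω \ S) →
        (F ⁻¹' {y} ∩ Ω).Finite ∧ ((F ⁻¹' {y} ∩ Ω).ncard : ℝ) = k := by
      intro y hy hyb
      refine hk y hy fun x hx hxy => ?_
      have hxS : x ∈ S := by
        by_contra h
        exact hyb ⟨x, ⟨hx, h⟩, hxy⟩
      exact ⟨fderiv ℝ F x, hxS.2.1.hasFDerivAt, hxS.2.2⟩
    suffices hkd : (d : ℝ) = k by
      intro y hy hyb
      obtain ⟨h1, h2⟩ := hk' y hy hyb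
      exact ⟨h1, by rw [← hkd] at h2; exact_mod_cast h2⟩
    -- `k` is a natural number, being attained
    obtain ⟨m, hm⟩ : ∃ m : ℕ, (m : ℝ) = k := by
      have hpos : 0 < volume (Metric.ball y₀ (ε / 4)) := Metric.measure_ball_pos _ _ hr
      obtain ⟨y, hy, hyb⟩ : ∃ y ∈ Metric.ball y₀ (ε / 4), y ∉ F '' (Ω \ S) := by
        by_contra! h
        exact hpos.ne' (measure_mono_null h hbad)
      exact ⟨_, (hk' y hy hyb).2⟩
    let φ : ContDiffBump y₀ := ⟨ε / 16, ε / 8, by positivity, by linarith⟩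
    let ρ : EuclideanSpace ℝ (Fin n) → ℝ := φ.normed volume
    have hρsupp : tsupport ρ = Metric.closedBall y₀ (ε / 8) := φ.tsupport_normed_eq
    have hρ0 : ∀ y, 0 ≤ ρ y := fun y => φ.nonneg_normed y
    have hρc : Continuous ρ := φ.continuous_normed
    have hρint : Integrable ρ := φ.integrable_normed
    have hρ1 : ∫ y, ρ y = 1 := φ.integral_normed
    have hρne : ∀ y, ρ y ≠ 0 → y ∈ Metric.ball y₀ (ε / 4) := by
      intro y hy
      have : y ∈ tsupport ρ := subset_tsupport _ hy
      rw [hρsupp, Metric.mem_closedBall] at this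
      rw [Metric.mem_ball]; linarith
    have hdρ := hd ρ φ.contDiff_normed φ.hasCompactSupport_normed (by
      rw [hρsupp]
      exact (Metric.closedBall_subset_ball (by linarith)).trans hεV) hρ1
    have harea := lintegral_det_mul_comp_of_encard_fiber volume hSm (f := F) (f' := fderiv ℝ F)
      (fun x hx => hx.2.1.hasFDerivAt) (fun x hx => hx.2.2)
      (w := fun y => ENNReal.ofReal (ρ y)) hρc.measurable.ennreal_ofReal (k := m) (by
        filter_upwards [hgood_ae] with y hyb hw
        have hy : y ∈ Metric.ball y₀ (ε / 4) := hρne y fun h => hw (by simp [h])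
        obtain ⟨h1, h2⟩ := hk' y hy hyb
        rw [← hfib y hyb, ← h1.cast_ncard_eq]
        rw [← hm] at h2
        exact_mod_cast h2)
    rw [← ofReal_integral_eq_lintegral_ofReal hρint (Filter.Eventually.of_forall hρ0), hρ1] at harea
    have hae : ∀ᵐ x ∂(volume.restrict Ω), ρ (F x) * (DF x).det = ρ (F x) * (fderiv ℝ F x).det := by
      filter_upwards [hdiff] with x hx
      rw [hx.fderiv]
    have hFm : AEMeasurable F (volume.restrict Ω) :=
      (hFc.mono subset_closure).aemeasurable hΩ.measurableSet
    rw [hdρ, ← hm, integral_congr_ae hae, integral_eq_lintegral_of_nonneg_ae]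
    · have hl : ∫⁻ x in Ω, ENNReal.ofReal (ρ (F x) * (fderiv ℝ F x).det)
          = ∫⁻ x in S, ENNReal.ofReal (fderiv ℝ F x).det * ENNReal.ofReal (ρ (F x)) := by
        rw [← inter_eq_self_of_subset_left hSΩ, ← setLIntegral_indicator hSm]
        refine lintegral_congr_ae ?_
        filter_upwards [hdiff, hJnn, ae_restrict_mem hΩ.measurableSet] with x hx1 hx2 hx3
        rw [← hx1.fderiv] at hx2
        by_cases hxS : x ∈ S
        · rw [indicator_of_mem hxS, mul_comm, ENNReal.ofReal_mul hx2]
        · have : (fderiv ℝ F x).det = 0 := by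
            refine le_antisymm ?_ hx2
            by_contra! h
            exact hxS ⟨hx3, hx1.differentiableAt, h⟩
          rw [indicator_of_notMem hxS, this]
          simp
      rw [hl, harea]
      simp
    · filter_upwards [hdiff, hJnn] with x hx1 hx2
      rw [← hx1.fderiv] at hx2
      exact mul_nonneg (hρ0 _) hx2
    · exact ((hρc.measurable.comp_aemeasurable hFm).mul
        hdet_meas.aemeasurable).aestronglyMeasurable
  rw [ae_restrict_iff' hVo.measurableSet, ae_iff]
  refine measure_mono_null (fun y hy => ?_) hbad
  by_contra hyb
  refine hy fun hyV => ?_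
  obtain ⟨r, hr, h⟩ := hlocal y hyV
  exact h y (Metric.mem_ball_self hr) hyb
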